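/- arXiv:1808.00627 — 2 statements merged into one kernel-verified Lean document; each statement's English description precedes it below -/
import Mathlib

section
/- Under the block setup and outer setup, let ε_1,…,ε_m > 0, Σ_ε = diag(ε_1 I_{n_1},…,ε_m I_{n_m}), and S_ε = Σ_ε B_D + Q + S_0. If ψ ∈ R^n is nonzero and S_ε ψ = μ (B_D + Q) ψ for some real number μ ≠ 1, then Q ψ = 0; equivalently, e_sᵀ M_s ψ_s = 0 for all s, i.e., ψ is M-orthogonal to the kernel of B_D. -/
/-!
Left multiplication of block `s` of the eigenvalue equation by `e_sᵀ` annihilates every term with a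
left factor `B_D`, in particular `S₀ = B_D [I 0] A⁻¹ Bᵀ`, and since `e_sᵀ Q_s = e_sᵀ M_s` what
remains is `e_sᵀ M_s ψ_s = μ e_sᵀ M_s ψ_s`. As `Q_s` has rank one with row space spanned by
`e_sᵀ M_s`, this also gives `Q ψ = 0`.
-/

open Matrix

/-- The all-ones vector `e` in `ℝ^k`. -/
noncomputable def onesV (k : ℕ) : Fin k → ℝ := fun _ => 1

/-- The rank-one block `Q_s = (1/d_s²) (M_s e_s)(M_s e_s)ᵀ`, where `d_s² = e_sᵀ M_s e_s`. -/
noncomputable def Qblk {k : ℕ} (M : Matrix (Fin k) (Fin k) ℝ) : Matrix (Fin k) (Fin k) ℝ :=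
  (onesV k ⬝ᵥ M.mulVec (onesV k))⁻¹ • vecMulVec (M.mulVec (onesV k)) (M.mulVec (onesV k))

section LinearAlgebra

variable {K ι m n o : Type*}

theorem blockDiagonal'_mulVec_apply [NonUnitalNonAssocSemiring K] [Fintype ι] [DecidableEq ι]
    {m n : ι → Type*} [∀ i, Fintype (n i)] (X : ∀ i, Matrix (m i) (n i) K)
    (w : (Σ i, n i) → K) (i : ι) (j : m i) :
    (blockDiagonal' X *ᵥ w) ⟨i, j⟩ = (X i *ᵥ fun k => w ⟨i, k⟩) j := by
  simp only [mulVec, dotProduct, Fintype.sum_sigma]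
  rw [Fintype.sum_eq_single i fun i' hi' => ?_]
  · simp only [blockDiagonal'_apply_eq]
  · exact Finset.sum_eq_zero fun k _ => by rw [blockDiagonal'_apply_ne _ _ _ hi'.symm, zero_mul]

theorem fromCols_zero_mulVec [Semiring K] [Fintype n] [Fintype o]
    (X : Matrix m n K) (w : n ⊕ o → K) : fromCols X 0 *ᵥ w = X *ᵥ (w ∘ Sum.inl) := by
  rw [fromCols_mulVec, zero_mulVec, add_zero]

theorem vecMul_eq_zero_of_isSymm_of_mulVec_eq_zero [NonUnitalCommSemiring K] [Fintype n]
    {X : Matrix n n K} (hX : X.IsSymm) {x : n → K} (hx : X *ᵥ x = 0) : x ᵥ* X = 0 := by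
  rw [← mulVec_transpose, hX.eq, hx]

theorem dotProduct_mulVec_eq_zero_of_vecMul_eq_zero [NonUnitalSemiring K] [Fintype m] [Fintype n]
    {u : m → K} {X : Matrix m n K} (hu : u ᵥ* X = 0) (x : n → K) : u ⬝ᵥ X *ᵥ x = 0 := by
  rw [dotProduct_mulVec, hu, zero_dotProduct]

theorem dotProduct_eq_zero_of_add_eq_smul_add [CommRing K] [NoZeroDivisors K] [Fintype n]
    {u p q r : n → K} {μ : K} (hp : u ⬝ᵥ p = 0) (hr : u ⬝ᵥ r = 0) (hμ : μ ≠ 1)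
    (h : p + q = μ • (r + q)) : u ⬝ᵥ q = 0 := by
  have hq : u ⬝ᵥ q = μ * (u ⬝ᵥ q) := by
    simpa only [dotProduct_add, dotProduct_smul, hp, hr, zero_add, smul_eq_mul] using
      congrArg (u ⬝ᵥ ·) h
  have : (μ - 1) * (u ⬝ᵥ q) = 0 := by linear_combination -hq
  exact (mul_eq_zero.mp this).resolve_left (sub_ne_zero.mpr hμ)

theorem blockDiagonal'_pencil_apply [CommSemiring K] [Fintype ι] [DecidableEq ι]
    {n : ι → Type*} [∀ i, Fintype (n i)] [∀ i, DecidableEq (n i)]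
    {X Y : ∀ i, Matrix (n i) (n i) K} {ε : ι → K} {ψ χ : (Σ i, n i) → K} {μ : K}
    (h : ((blockDiagonal' fun i => ε i • (1 : Matrix (n i) (n i) K)) * blockDiagonal' X +
      blockDiagonal' Y) *ᵥ ψ + blockDiagonal' X *ᵥ χ =
      μ • (blockDiagonal' X + blockDiagonal' Y) *ᵥ ψ) (i : ι) :
    X i *ᵥ (ε i • (fun j => ψ ⟨i, j⟩) + fun j => χ ⟨i, j⟩) + Y i *ᵥ (fun j => ψ ⟨i, j⟩) =
      μ • (X i *ᵥ (fun j => ψ ⟨i, j⟩) + Y i *ᵥ (fun j => ψ ⟨i, j⟩)) := by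
  ext j
  have hj := congrFun h ⟨i, j⟩
  simp only [← blockDiagonal'_mul, smul_mul, Matrix.one_mul, add_mulVec, Pi.add_apply,
    Pi.smul_apply, blockDiagonal'_mulVec_apply, smul_mulVec] at hj
  simp only [mulVec_add, mulVec_smul, Pi.add_apply, Pi.smul_apply]
  rw [← hj, add_right_comm]

variable [Field K] [Fintype m] [Fintype n]

/-- The rank-one term `(uᵀ M v)⁻¹ (M v)(uᵀ M)` of Wedderburn's rank reduction formula; for symmetric
`M` and `u = v = e` it is the block `Q_s`. It is zero when `uᵀ M v = 0`. -/
def wedderburnTerm (M : Matrix m n K) (u : m → K) (v : n → K) : Matrix m n K :=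
  (u ⬝ᵥ M *ᵥ v)⁻¹ • vecMulVec (M *ᵥ v) (u ᵥ* M)

theorem vecMul_wedderburnTerm {M : Matrix m n K} {u : m → K} {v : n → K}
    (h : u ⬝ᵥ M *ᵥ v ≠ 0) : u ᵥ* wedderburnTerm M u v = u ᵥ* M := by
  rw [wedderburnTerm, vecMul_smul, vecMul_vecMulVec, smul_smul, inv_mul_cancel₀ h, one_smul]

theorem wedderburnTerm_mulVec_eq_zero {M : Matrix m n K} {u : m → K} {x : n → K}
    (hx : u ⬝ᵥ M *ᵥ x = 0) (v : n → K) : wedderburnTerm M u v *ᵥ x = 0 := by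
  rw [wedderburnTerm, smul_mulVec, vecMulVec_mulVec, ← dotProduct_mulVec, hx, MulOpposite.op_zero,
    zero_smul, smul_zero]

end LinearAlgebra

section AllOnes

variable {k : ℕ}

theorem Qblk_eq_wedderburnTerm {M : Matrix (Fin k) (Fin k) ℝ} (hM : M.IsSymm) :
    Qblk M = wedderburnTerm M (onesV k) (onesV k) := by
  rw [Qblk, wedderburnTerm, ← mulVec_transpose, hM.eq]

theorem onesV_ne_zero (hk : 0 < k) : onesV k ≠ 0 :=
  fun h => one_ne_zero (congrFun h ⟨0, hk⟩)

theorem onesV_dotProduct_mulVec_pos (hk : 0 < k) {M : Matrix (Fin k) (Fin k) ℝ} (hM : M.PosDef) :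
    0 < onesV k ⬝ᵥ M *ᵥ onesV k := by
  simpa only [star_trivial] using hM.dotProduct_mulVec_pos (onesV_ne_zero hk)

end AllOnes

theorem stmt8_general {K ι o : Type*} [Field K] [Fintype ι] [DecidableEq ι] [Fintype o]
    {n : ι → Type*} [∀ s, Fintype (n s)] [∀ s, DecidableEq (n s)]
    (M X : ∀ s, Matrix (n s) (n s) K) (u v : ∀ s, n s → K)
    (huv : ∀ s, u s ⬝ᵥ M s *ᵥ v s ≠ 0) (hX : ∀ s, u s ᵥ* X s = 0)
    (G : Matrix ((Σ s, n s) ⊕ o) ((Σ s, n s) ⊕ o) K)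
    {D Q : Matrix (Σ s, n s) (Σ s, n s) K} (hD : D = blockDiagonal' X)
    (hQ : Q = blockDiagonal' fun s => wedderburnTerm (M s) (u s) (v s))
    {B : Matrix (Σ s, n s) ((Σ s, n s) ⊕ o) K} (hB : B = fromCols D 0)
    (ε : ι → K) {ψ : (Σ s, n s) → K} {μ : K} (hμ : μ ≠ 1)
    (heig : ((blockDiagonal' fun s => ε s • (1 : Matrix (n s) (n s) K)) * D + Q + B * G * Bᵀ) *ᵥ ψ =
      μ • (D + Q) *ᵥ ψ) :
    Q *ᵥ ψ = 0 ∧ ∀ s, u s ⬝ᵥ M s *ᵥ (fun i => ψ ⟨s, i⟩) = 0 := by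
  subst hD hQ
  have hS₀ : (B * G * Bᵀ) *ᵥ ψ = blockDiagonal' X *ᵥ (((G * Bᵀ) *ᵥ ψ) ∘ Sum.inl) := by
    rw [← fromCols_zero_mulVec, ← hB, mulVec_mulVec, Matrix.mul_assoc]
  rw [add_mulVec, hS₀] at heig
  have horth (s : ι) : u s ⬝ᵥ M s *ᵥ (fun i => ψ ⟨s, i⟩) = 0 := by
    have hrange := dotProduct_mulVec_eq_zero_of_vecMul_eq_zero (hX s)
    have huQ := dotProduct_eq_zero_of_add_eq_smul_add (hrange _) (hrange _) hμ
      (blockDiagonal'_pencil_apply heig s)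
    rwa [dotProduct_mulVec, vecMul_wedderburnTerm (huv s), ← dotProduct_mulVec] at huQ
  refine ⟨?_, horth⟩
  ext ⟨s, j⟩
  rw [blockDiagonal'_mulVec_apply, wedderburnTerm_mulVec_eq_zero (horth s), Pi.zero_apply,
    Pi.zero_apply]

/-- any eigenvector of the pencil `(S_ε, B_D+Q)` for an eigenvalue `μ ≠ 1`
satisfies `Q ψ = 0`, equivalently it is M-orthogonal to `ker B_D`. -/
theorem stmt8
    (m : ℕ) (hm : 1 ≤ m) (ns : Fin m → ℕ) (hns : ∀ s, 0 < ns s)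
    (M Bb : ∀ s : Fin m, Matrix (Fin (ns s)) (Fin (ns s)) ℝ)
    (hM : ∀ s, (M s).PosDef) (hBb : ∀ s, (Bb s).PosSemidef)
    (hker : ∀ s, LinearMap.ker (Bb s).mulVecLin = Submodule.span ℝ {onesV (ns s)})
    (n0 : ℕ) (hn0 : 1 ≤ n0)
    (A : Matrix ((Σ s, Fin (ns s)) ⊕ Fin n0) ((Σ s, Fin (ns s)) ⊕ Fin n0) ℝ)
    (hA : A.PosDef)
    (BD Q : Matrix (Σ s, Fin (ns s)) (Σ s, Fin (ns s)) ℝ)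
    (hBD : BD = blockDiagonal' Bb)
    (hQ : Q = blockDiagonal' fun s => Qblk (M s))
    (B : Matrix (Σ s, Fin (ns s)) ((Σ s, Fin (ns s)) ⊕ Fin n0) ℝ)
    (hB : B = fromCols BD 0)
    (S0 : Matrix (Σ s, Fin (ns s)) (Σ s, Fin (ns s)) ℝ)
    (hS0 : S0 = B * A⁻¹ * Bᵀ)
    (ε : Fin m → ℝ) (hε : ∀ s, 0 < ε s)
    (Sig Sε : Matrix (Σ s, Fin (ns s)) (Σ s, Fin (ns s)) ℝ)
    (hSig : Sig = blockDiagonal' fun s => ε s • (1 : Matrix (Fin (ns s)) (Fin (ns s)) ℝ))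
    (hSε : Sε = Sig * BD + Q + S0)
    (ψ : (Σ s, Fin (ns s)) → ℝ) (hψ : ψ ≠ 0)
    (μ : ℝ) (hμ : μ ≠ 1)
    (heig : Sε.mulVec ψ = μ • (BD + Q).mulVec ψ) :
    Q.mulVec ψ = 0 ∧
    ∀ s : Fin m, onesV (ns s) ⬝ᵥ (M s).mulVec (fun i => ψ ⟨s, i⟩) = 0 := by
  subst hSε hSig hS0
  simp only [Qblk_eq_wedderburnTerm (isHermitian_iff_isSymm.mp (hM _).isHermitian)] at hQ
  have hBb_ones (s) : Bb s *ᵥ onesV (ns s) = 0 :=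
    (Submodule.span_singleton_le_iff_mem _ _).mp (hker s).ge
  exact stmt8_general M Bb (fun s => onesV (ns s)) (fun s => onesV (ns s))
    (fun s => (onesV_dotProduct_mulVec_pos (hns s) (hM s)).ne')
    (fun s => vecMul_eq_zero_of_isSymm_of_mulVec_eq_zero
      (isHermitian_iff_isSymm.mp (hBb s).isHermitian) (hBb_ones s))
    A⁻¹ hBD hQ hB ε hμ heig
end

section
/- Under the block setup, let A be a real symmetric positive definite N×N matrix in block form A = [[A_DD, A_D0],[A_0D, A_00]] with A_DD of size n×n (N = n + n_0, n_0 ≥ 1), and let C > 0. Assume the discrete extension estimate: for every x ∈ R^n there exists v ∈ R^{n_0} such that (x,v)ᵀ A (x,v) ≤ xᵀ B_D x + C²·xᵀ(B_D + Q)x. Then, with S_00 = A_DD − A_D0 A_00^{−1} A_0D, one has S_00 ≼ (1+C²)(B_D + Q) in the Loewner order, and consequently every eigenvalue μ of the pencil (B_D + Q, S_00) (i.e., every μ with (B_D+Q)x = μ S_00 x for some x ≠ 0) satisfies μ ≥ 1/(1+C²). -/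
open Matrix

/-!
The Schur complement is the value of a minimisation: for `D` positive definite, completing the
square in `v` shows that `x* S x`, with `S = A - B D⁻¹ B*`, is the minimum over `v` of the form of
`[[A, B], [B*, D]]` at `(x, v)`. So any extension `v` of `x` bounds `x* S x` from above, which turns
the extension estimate into a Loewner bound on `S`; and the minimising extension transfers positive
definiteness to `S`. If then `T x = μ S x` and `S ≼ c T`, dividing `x* S x ≤ c x* T x = c μ x* S x`
by `x* S x > 0` gives `1 / c ≤ μ`.
-/

section BlockDiagonal

variable {o R : Type*} {m' n' : o → Type*}

theorem isHermitian_blockDiagonal' [DecidableEq o] [AddMonoid R] [StarAddMonoid R]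
    {M : ∀ k, Matrix (m' k) (m' k) R} (hM : ∀ k, (M k).IsHermitian) :
    (blockDiagonal' M).IsHermitian := by
  rw [IsHermitian, blockDiagonal'_conjTranspose, funext fun k => (hM k).eq]

variable [Fintype o] [DecidableEq o] [∀ k, Fintype (n' k)]

theorem blockDiagonal'_mulVec_apply_s15 [NonUnitalNonAssocSemiring R]
    (M : ∀ k, Matrix (m' k) (n' k) R) (x : (Σ k, n' k) → R) (k : o) (i : m' k) :
    (blockDiagonal' M *ᵥ x) ⟨k, i⟩ = (M k *ᵥ fun j => x ⟨k, j⟩) i := by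
  simp only [mulVec, dotProduct, Fintype.sum_sigma]
  rw [Fintype.sum_eq_single k fun l hl => Finset.sum_eq_zero fun j _ => by
    rw [blockDiagonal'_apply_ne M i j hl.symm, zero_mul]]
  simp only [blockDiagonal'_apply_eq]

theorem dotProduct_blockDiagonal'_mulVec [NonUnitalNonAssocSemiring R] [∀ k, Fintype (m' k)]
    (M : ∀ k, Matrix (m' k) (n' k) R) (y : (Σ k, m' k) → R) (x : (Σ k, n' k) → R) :
    y ⬝ᵥ blockDiagonal' M *ᵥ x = ∑ k, (fun i => y ⟨k, i⟩) ⬝ᵥ M k *ᵥ fun j => x ⟨k, j⟩ := by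
  simp only [dotProduct, Fintype.sum_sigma, blockDiagonal'_mulVec_apply_s15]

omit [Fintype o] [∀ k, Fintype (n' k)] in variable [Finite o] [∀ k, Finite (n' k)] in
theorem posSemidef_blockDiagonal' [Ring R] [PartialOrder R] [StarRing R] [AddLeftMono R]
    {M : ∀ k, Matrix (n' k) (n' k) R} (hM : ∀ k, (M k).PosSemidef) :
    (blockDiagonal' M).PosSemidef := by
  have := Fintype.ofFinite o
  have := fun k => Fintype.ofFinite (n' k)
  refine .of_dotProduct_mulVec_nonneg (isHermitian_blockDiagonal' fun k => (hM k).isHermitian)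
    fun x => ?_
  rw [dotProduct_blockDiagonal'_mulVec]
  exact Finset.sum_nonneg fun k _ => (hM k).dotProduct_mulVec_nonneg fun i => x ⟨k, i⟩

end BlockDiagonal

theorem posSemidef_Qblk {k : ℕ} {M : Matrix (Fin k) (Fin k) ℝ} (hM : M.PosSemidef) :
    (Qblk M).PosSemidef := by
  have hd : 0 ≤ onesV k ⬝ᵥ M *ᵥ onesV k := by
    simpa only [star_trivial] using hM.dotProduct_mulVec_nonneg (onesV k)
  have hv : (vecMulVec (M *ᵥ onesV k) (M *ᵥ onesV k)).PosSemidef := by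
    simpa only [star_trivial] using posSemidef_vecMulVec_self_star (M *ᵥ onesV k)
  exact hv.smul (inv_nonneg.mpr hd)

section SchurComplement

variable {m n K : Type*} [Fintype m] [Fintype n] [DecidableEq n]
  [Field K] [PartialOrder K] [StarRing K] {A : Matrix m m K} {B : Matrix m n K} {D : Matrix n n K}

theorem dotProduct_fromBlocks_mulVec_eq_add_schurComplement (hD : D.PosDef) (x : m → K)
    (v : n → K) :
    star (Sum.elim x v) ⬝ᵥ fromBlocks A B Bᴴ D *ᵥ Sum.elim x v =
      star ((D⁻¹ * Bᴴ) *ᵥ x + v) ⬝ᵥ D *ᵥ ((D⁻¹ * Bᴴ) *ᵥ x + v) +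
        star x ⬝ᵥ (A - B * D⁻¹ * Bᴴ) *ᵥ x := by
  have : Invertible D := hD.isUnit.invertible
  simpa only [← dotProduct_mulVec] using schur_complement_eq₂₂ A B x v hD.isHermitian

theorem dotProduct_schurComplement_mulVec_le [AddLeftMono K] (hD : D.PosDef)
    (x : m → K) (v : n → K) :
    star x ⬝ᵥ (A - B * D⁻¹ * Bᴴ) *ᵥ x ≤
      star (Sum.elim x v) ⬝ᵥ fromBlocks A B Bᴴ D *ᵥ Sum.elim x v := by
  rw [dotProduct_fromBlocks_mulVec_eq_add_schurComplement hD]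
  exact le_add_of_nonneg_left (hD.posSemidef.dotProduct_mulVec_nonneg _)

theorem dotProduct_fromBlocks_mulVec_eq_schurComplement (hD : D.PosDef) (x : m → K) :
    star (Sum.elim x (-((D⁻¹ * Bᴴ) *ᵥ x))) ⬝ᵥ fromBlocks A B Bᴴ D *ᵥ
        Sum.elim x (-((D⁻¹ * Bᴴ) *ᵥ x)) =
      star x ⬝ᵥ (A - B * D⁻¹ * Bᴴ) *ᵥ x := by
  rw [dotProduct_fromBlocks_mulVec_eq_add_schurComplement hD, add_neg_cancel, mulVec_zero,
    dotProduct_zero, zero_add]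

omit [Fintype m] in variable [Finite m] in
theorem posDef_schurComplement (hA : (fromBlocks A B Bᴴ D).PosDef) :
    (A - B * D⁻¹ * Bᴴ).PosDef := by
  have := Fintype.ofFinite m
  have hD : D.PosDef := hA.submatrix (e := Sum.inr) Sum.inr_injective
  refine .of_dotProduct_mulVec_pos
    ((IsHermitian.fromBlocks₂₂ A B hD.isHermitian).mp hA.isHermitian) fun x hx => ?_
  rw [← dotProduct_fromBlocks_mulVec_eq_schurComplement hD]
  exact hA.dotProduct_mulVec_pos fun h => hx (congrArg (· ∘ Sum.inl) h)

theorem posSemidef_sub_schurComplement [AddLeftMono K] (hD : D.PosDef)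
    (hA : (fromBlocks A B Bᴴ D).IsHermitian) {T : Matrix m m K} (hT : T.IsHermitian)
    (hext : ∀ x : m → K, ∃ v : n → K,
      star (Sum.elim x v) ⬝ᵥ fromBlocks A B Bᴴ D *ᵥ Sum.elim x v ≤ star x ⬝ᵥ T *ᵥ x) :
    (T - (A - B * D⁻¹ * Bᴴ)).PosSemidef := by
  refine .of_dotProduct_mulVec_nonneg
    (hT.sub ((IsHermitian.fromBlocks₂₂ A B hD.isHermitian).mp hA)) fun x => ?_
  obtain ⟨v, hv⟩ := hext x
  rw [sub_mulVec, dotProduct_sub, sub_nonneg]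
  exact (dotProduct_schurComplement_mulVec_le hD x v).trans hv

end SchurComplement

-- `inv_nonneg` asks for `PosMulReflectLT`, which is not inferred from `StarOrderedRing`; here
-- `a⁻¹` is nonnegative as the conjugate `(a⁻¹)* a a⁻¹` of `a`.
theorem inv_nonneg_of_starOrderedRing {K : Type*} [DivisionSemiring K] [PartialOrder K]
    [StarRing K] [StarOrderedRing K] {a : K} (ha : 0 ≤ a) : 0 ≤ a⁻¹ := by
  obtain rfl | ha0 := eq_or_ne a 0
  · exact inv_zero.ge
  have hstar : star a⁻¹ = a⁻¹ := (IsSelfAdjoint.of_nonneg ha).inv₀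
  simpa only [hstar, inv_mul_cancel₀ ha0, one_mul] using star_left_conjugate_nonneg ha a⁻¹

theorem one_div_le_of_mulVec_eq_smul_mulVec {m K : Type*} [Fintype m] [Field K] [PartialOrder K]
    [StarRing K] [StarOrderedRing K] {S T : Matrix m m K} {c μ : K} {x : m → K} (hS : S.PosDef)
    (hST : (c • T - S).PosSemidef) (hc : 0 < c) (hx : x ≠ 0) (hμ : T *ᵥ x = μ • S *ᵥ x) :
    1 / c ≤ μ := by
  have hSx : 0 < star x ⬝ᵥ S *ᵥ x := hS.dotProduct_mulVec_pos hx
  have hle : 0 ≤ (c * μ - 1) * (star x ⬝ᵥ S *ᵥ x) := by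
    simpa only [sub_mulVec, smul_mulVec, hμ, dotProduct_sub, dotProduct_smul, smul_eq_mul,
      sub_mul, mul_assoc, one_mul] using hST.dotProduct_mulVec_nonneg x
  have hcμ : 0 ≤ c * μ - 1 := by
    simpa only [mul_inv_cancel_right₀ hSx.ne'] using
      mul_nonneg hle (inv_nonneg_of_starOrderedRing hSx.le)
  have hsub : 0 ≤ c⁻¹ * (c * μ - 1) := mul_nonneg (inv_nonneg_of_starOrderedRing hc.le) hcμ
  rwa [mul_sub, inv_mul_cancel_left₀ hc.ne', mul_one, sub_nonneg, ← one_div] at hsub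

theorem stmt15_general {m n K : Type*} [Fintype m] [Fintype n] [DecidableEq n] [Field K]
    [PartialOrder K] [StarRing K] [StarOrderedRing K] {A P Q : Matrix m m K} {B : Matrix m n K}
    {B' : Matrix n m K} {D : Matrix n n K} {c : K} (hA : (fromBlocks A B B' D).PosDef)
    (hP : P.IsHermitian) (hQ : Q.PosSemidef) (hc : 0 ≤ c)
    (hext : ∀ x : m → K, ∃ v : n → K,
      star (Sum.elim x v) ⬝ᵥ fromBlocks A B B' D *ᵥ Sum.elim x v ≤
        star x ⬝ᵥ P *ᵥ x + c * (star x ⬝ᵥ (P + Q) *ᵥ x)) :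
    ((1 + c) • (P + Q) - (A - B * D⁻¹ * B')).PosSemidef ∧
      ∀ (μ : K) (x : m → K), x ≠ 0 →
        (P + Q) *ᵥ x = μ • (A - B * D⁻¹ * B') *ᵥ x → 1 / (1 + c) ≤ μ := by
  obtain rfl : Bᴴ = B' := (isHermitian_fromBlocks_iff.mp hA.isHermitian).2.1
  have hc' : 0 < 1 + c := add_pos_of_pos_of_nonneg one_pos hc
  have hPQ : ((1 + c) • (P + Q)).IsHermitian :=
    (hP.add hQ.isHermitian).smul (IsSelfAdjoint.of_nonneg hc'.le)
  have hS : ((1 + c) • (P + Q) - (A - B * D⁻¹ * Bᴴ)).PosSemidef := by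
    refine posSemidef_sub_schurComplement (hA.submatrix (e := Sum.inr) Sum.inr_injective)
      hA.isHermitian hPQ fun x => (hext x).imp fun v hv => hv.trans ?_
    rw [smul_mulVec, dotProduct_smul, smul_eq_mul, one_add_mul]
    gcongr
    rw [add_mulVec, dotProduct_add]
    exact le_add_of_nonneg_right (hQ.dotProduct_mulVec_nonneg x)
  exact ⟨hS, fun μ x hx hμ =>
    one_div_le_of_mulVec_eq_smul_mulVec (posDef_schurComplement hA) hS hc' hx hμ⟩

/-- under the discrete extension estimate, `S_00 ≼ (1+C²)(B_D + Q)`, and every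
eigenvalue of the pencil `(B_D + Q, S_00)` is at least `1/(1+C²)`. -/
theorem stmt15
    (m : ℕ) (hm : 1 ≤ m) (ns : Fin m → ℕ) (hns : ∀ s, 0 < ns s)
    (M Bb : ∀ s : Fin m, Matrix (Fin (ns s)) (Fin (ns s)) ℝ)
    (hM : ∀ s, (M s).PosDef) (hBb : ∀ s, (Bb s).PosSemidef)
    (hker : ∀ s, LinearMap.ker (Bb s).mulVecLin = Submodule.span ℝ {onesV (ns s)})
    (BD Q : Matrix (Σ s, Fin (ns s)) (Σ s, Fin (ns s)) ℝ)
    (hBD : BD = blockDiagonal' Bb)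
    (hQ : Q = blockDiagonal' fun s => Qblk (M s))
    (n0 : ℕ) (hn0 : 1 ≤ n0)
    (ADD : Matrix (Σ s, Fin (ns s)) (Σ s, Fin (ns s)) ℝ)
    (AD0 : Matrix (Σ s, Fin (ns s)) (Fin n0) ℝ)
    (A0D : Matrix (Fin n0) (Σ s, Fin (ns s)) ℝ)
    (A00 : Matrix (Fin n0) (Fin n0) ℝ)
    (hA : (fromBlocks ADD AD0 A0D A00).PosDef)
    (C : ℝ) (hC : 0 < C)
    (hext : ∀ x : (Σ s, Fin (ns s)) → ℝ, ∃ v : Fin n0 → ℝ,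
      Sum.elim x v ⬝ᵥ (fromBlocks ADD AD0 A0D A00).mulVec (Sum.elim x v) ≤
        x ⬝ᵥ BD.mulVec x + C ^ 2 * (x ⬝ᵥ (BD + Q).mulVec x)) :
    ((1 + C ^ 2) • (BD + Q) - (ADD - AD0 * A00⁻¹ * A0D)).PosSemidef ∧
    ∀ (μ : ℝ) (x : (Σ s, Fin (ns s)) → ℝ), x ≠ 0 →
      (BD + Q).mulVec x = μ • (ADD - AD0 * A00⁻¹ * A0D).mulVec x →
      1 / (1 + C ^ 2) ≤ μ := by
  subst hBD hQ
  exact stmt15_general hA (isHermitian_blockDiagonal' fun s => (hBb s).isHermitian)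
    (posSemidef_blockDiagonal' fun s => posSemidef_Qblk (hM s).posSemidef) (sq_nonneg C) hext
end
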